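/- arXiv:1004.1955 — 2 statements merged into one kernel-verified Lean document; each statement's English description precedes it below -/
import Mathlib

section
/- Let r ≥ 1 and m ≥ 1 be integers and let α be a real number with 0 ≤ α < m/2. Let h and s be independent random variables, with h distributed chi-squared with r degrees of freedom and s distributed chi-squared with m degrees of freedom. Then E[ (1 + h/s)^α ] ≤ ( Γ((m+r)/2) / ( Γ(r/2)·Γ(m/2) ) ) · ( 2/(m − 2α) + 2/r ), where Γ is the Gamma function. -/
open MeasureTheory ProbabilityTheory

/-- The chi-squared distribution with `k` degrees of freedom: the Gamma distribution
with shape `k/2` and rate `1/2`. -/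
noncomputable def chiSquared (k : ℝ) : Measure ℝ := gammaMeasure (k / 2) (1 / 2)

lemma lint_gamma (a r : ℝ) {f : ℝ → ENNReal} (hf : Measurable f) :
    ∫⁻ x, f x ∂(gammaMeasure a r) =
      ∫⁻ x in Set.Ioi 0,
        ENNReal.ofReal (r ^ a / (Real.Gamma a) * x ^ (a - 1) * Real.exp (-(r * x))) * f x := by
  have hm : Measurable (gammaPDF a r) := (measurable_gammaPDFReal a r).ennreal_ofReal
  rw [gammaMeasure, lintegral_withDensity_eq_lintegral_mul _ hm hf,
    setLIntegral_congr Ioi_ae_eq_Ici, ← lintegral_indicator measurableSet_Ici]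
  refine lintegral_congr fun x => ?_
  by_cases hx : 0 ≤ x
  · simp [gammaPDF_of_nonneg hx, hx]
  · simp [gammaPDF_of_neg (not_le.mp hx), hx]

lemma lint_gamma_kernel {c r : ℝ} (hc : 0 < c) (hr : 0 < r) :
    ∫⁻ x in Set.Ioi 0,
        ENNReal.ofReal (r ^ c / (Real.Gamma c) * x ^ (c - 1) * Real.exp (-(r * x))) = 1 := by
  have h := lint_gamma c r (f := fun _ => 1) measurable_const
  have := isProbabilityMeasure_gammaMeasure hc hr
  simpa using h.symm

lemma key_real {a b α s t : ℝ} (ha : 0 < a) (hb : 0 < b) (hs : 0 < s) (ht : 0 < t) :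
    ((1 / 2) ^ b / (Real.Gamma b) * s ^ (b - 1) * Real.exp (-(1 / 2 * s))) *
      (s * (((1 / 2) ^ a / (Real.Gamma a) * (s * t) ^ (a - 1) * Real.exp (-(1 / 2 * (s * t)))) *
        (1 + s * t / s) ^ α)) =
    (Real.Gamma (a + b) / (Real.Gamma a * Real.Gamma b)) *
      ((t ^ (a - 1) * (1 + t) ^ (α - a - b)) *
      (((1 + t) / 2) ^ (a + b) / (Real.Gamma (a + b)) * s ^ (a + b - 1) *
        Real.exp (-((1 + t) / 2 * s)))) := by
  have h1 : s * t / s = t := by field_simp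
  have ht1 : 0 < 1 + t := by linarith
  have hga := Real.Gamma_pos_of_pos ha
  have hgb := Real.Gamma_pos_of_pos hb
  have hgab := Real.Gamma_pos_of_pos (add_pos ha hb)
  have e1 : Real.exp (-((1 + t) / 2 * s)) =
      Real.exp (-(1 / 2 * s)) * Real.exp (-(1 / 2 * (s * t))) := by
    rw [← Real.exp_add]; congr 1; ring
  have e2 : s ^ (a + b - 1) = s ^ (b - 1) * s * s ^ (a - 1) := by
    rw [← Real.rpow_add_one hs.ne', ← Real.rpow_add hs]; congr 1; ring
  have e3 : ((1 + t) / 2) ^ (a + b) = (1 + t) ^ (a + b) * ((1 / 2) ^ a * (1 / 2) ^ b) := by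
    rw [div_eq_mul_one_div, Real.mul_rpow ht1.le (by norm_num), Real.rpow_add (x := 1 / 2) (by norm_num)]
  have e4 : (1 + t) ^ α = (1 + t) ^ (α - a - b) * (1 + t) ^ (a + b) := by
    rw [← Real.rpow_add ht1]; congr 1; ring
  rw [h1, e1, e2, e3, e4, Real.mul_rpow hs.le ht.le]
  field_simp

lemma lint_main {a b : ℝ} (α : ℝ) (ha : 0 < a) (hb : 0 < b) :
    ∫⁻ p : ℝ × ℝ, ENNReal.ofReal ((1 + p.1 / p.2) ^ α)
        ∂((gammaMeasure a (1 / 2)).prod (gammaMeasure b (1 / 2))) =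
      ENNReal.ofReal (Real.Gamma (a + b) / (Real.Gamma a * Real.Gamma b)) *
      ∫⁻ t in Set.Ioi 0, ENNReal.ofReal (t ^ (a - 1) * (1 + t) ^ (α - a - b)) := by
  have := isProbabilityMeasure_gammaMeasure ha (r := 1 / 2) (by norm_num)
  have := isProbabilityMeasure_gammaMeasure hb (r := 1 / 2) (by norm_num)
  have hmeas : Measurable fun p : ℝ × ℝ => ENNReal.ofReal ((1 + p.1 / p.2) ^ α) := by fun_prop
  rw [lintegral_prod_symm' _ hmeas, lint_gamma _ _ hmeas.lintegral_prod_left']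
  have hC : 0 ≤ Real.Gamma (a + b) / (Real.Gamma a * Real.Gamma b) := by positivity
  have step : ∀ s ∈ Set.Ioi (0 : ℝ),
      ENNReal.ofReal ((1 / 2) ^ b / (Real.Gamma b) * s ^ (b - 1) * Real.exp (-(1 / 2 * s))) *
        ∫⁻ x, ENNReal.ofReal ((1 + x / s) ^ α) ∂(gammaMeasure a (1 / 2)) =
      ∫⁻ t in Set.Ioi 0,
        ENNReal.ofReal (Real.Gamma (a + b) / (Real.Gamma a * Real.Gamma b)) *
        (ENNReal.ofReal (t ^ (a - 1) * (1 + t) ^ (α - a - b)) *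
        ENNReal.ofReal (((1 + t) / 2) ^ (a + b) / (Real.Gamma (a + b)) * s ^ (a + b - 1) *
          Real.exp (-((1 + t) / 2 * s)))) := by
    intro s hs
    have hs : 0 < s := hs
    rw [lint_gamma _ _ (by fun_prop)]
    have him : (fun t => s * t) '' Set.Ioi 0 = Set.Ioi (0 : ℝ) := by
      rw [Set.image_mul_left_Ioi hs, mul_zero]
    conv_lhs => rw [← him]
    rw [lintegral_image_eq_lintegral_abs_deriv_mul (f' := fun _ => s) measurableSet_Ioi
      (fun x _ => by simpa using ((hasDerivAt_id x).const_mul s).hasDerivWithinAt)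
      (fun x _ y _ h => mul_left_cancel₀ hs.ne' h),
      ← lintegral_const_mul _ (by fun_prop)]
    refine setLIntegral_congr_fun measurableSet_Ioi fun t ht => ?_
    have ht : 0 < t := ht
    have ht1 : 0 < 1 + t := by linarith
    have h1 : 0 < 1 + s * t / s := by positivity
    rw [abs_of_pos hs, ← ENNReal.ofReal_mul (by positivity), ← ENNReal.ofReal_mul (by positivity),
      ← ENNReal.ofReal_mul (by positivity), ← ENNReal.ofReal_mul (by positivity),
      ← ENNReal.ofReal_mul hC, key_real ha hb hs ht]
  rw [setLIntegral_congr_fun measurableSet_Ioi step, lintegral_lintegral_swap (by fun_prop),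
    ← lintegral_const_mul _ (by fun_prop)]
  refine setLIntegral_congr_fun measurableSet_Ioi fun t ht => ?_
  have ht : 0 < t := ht
  rw [lintegral_const_mul _ (by fun_prop), lintegral_const_mul _ (by fun_prop),
    lint_gamma_kernel (by positivity) (by positivity), mul_one]

lemma gamma_ineq {x y : ℝ} (hx : 0 < x) (hy : 0 < y) :
    Real.Gamma x * Real.Gamma y / Real.Gamma (x + y) ≤ 1 / x + 1 / y := by
  have hxy : 0 < x + y := add_pos hx hy
  have h1 := Real.Gamma_mul_add_mul_le_rpow_Gamma_mul_rpow_Gamma (s := 1) (t := 1 + x + y)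
    (a := y / (x + y)) (b := x / (x + y)) (by norm_num) (by positivity) (by positivity)
    (by positivity) (by field_simp; ring)
  have h2 := Real.Gamma_mul_add_mul_le_rpow_Gamma_mul_rpow_Gamma (s := 1) (t := 1 + x + y)
    (a := x / (x + y)) (b := y / (x + y)) (by norm_num) (by positivity) (by positivity)
    (by positivity) (by field_simp)
  have e1 : y / (x + y) * 1 + x / (x + y) * (1 + x + y) = x + 1 := by field_simp; ring
  have e2 : x / (x + y) * 1 + y / (x + y) * (1 + x + y) = y + 1 := by field_simp; ring
  have e3 : 1 + x + y = (x + y) + 1 := by ring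
  have hG : 0 < Real.Gamma (x + y + 1) := Real.Gamma_pos_of_pos (by positivity)
  have hG1 : 0 < Real.Gamma (x + 1) := Real.Gamma_pos_of_pos (by positivity)
  have hG2 : 0 < Real.Gamma (y + 1) := Real.Gamma_pos_of_pos (by positivity)
  rw [e1, e3, Real.Gamma_one, Real.one_rpow, one_mul] at h1
  rw [e2, e3, Real.Gamma_one, Real.one_rpow, one_mul] at h2
  have h3 := mul_le_mul h1 h2 hG2.le (by positivity)
  rw [← Real.rpow_add hG, show x / (x + y) + y / (x + y) = 1 by field_simp, Real.rpow_one,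
    Real.Gamma_add_one hx.ne', Real.Gamma_add_one hy.ne', Real.Gamma_add_one hxy.ne'] at h3
  have hg := Real.Gamma_pos_of_pos hxy
  rw [div_add_div _ _ hx.ne' hy.ne', div_le_div_iff₀ hg (by positivity)]
  linarith

theorem stmt_12 (r m : ℕ) (hr : 1 ≤ r) (hm : 1 ≤ m)
    (α : ℝ) (hα0 : 0 ≤ α) (hα : α < m / 2) :
    ∫⁻ p : ℝ × ℝ, ENNReal.ofReal ((1 + p.1 / p.2) ^ α)
        ∂((chiSquared r).prod (chiSquared m)) ≤
      ENNReal.ofReal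
        (Real.Gamma (((m : ℝ) + r) / 2) /
            (Real.Gamma ((r : ℝ) / 2) * Real.Gamma ((m : ℝ) / 2)) *
          (2 / ((m : ℝ) - 2 * α) + 2 / r)) := by
  have hr' : (0 : ℝ) < r := by exact_mod_cast hr
  have hm' : (0 : ℝ) < m := by exact_mod_cast hm
  have ha : (0 : ℝ) < r / 2 := by positivity
  have hb : (0 : ℝ) < m / 2 := by positivity
  have hc : (0 : ℝ) < m / 2 - α := by linarith
  have hga := Real.Gamma_pos_of_pos ha
  have hgc := Real.Gamma_pos_of_pos hc
  have hgac := Real.Gamma_pos_of_pos (add_pos ha hc)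
  unfold chiSquared
  rw [lint_main α ha hb, show ((m : ℝ) + r) / 2 = r / 2 + m / 2 by ring,
    ENNReal.ofReal_mul (by positivity)]
  gcongr
  have h0 := lint_main 0 ha hc
  have := isProbabilityMeasure_gammaMeasure ha (r := 1 / 2) (by norm_num)
  have := isProbabilityMeasure_gammaMeasure hc (r := 1 / 2) (by norm_num)
  simp only [Real.rpow_zero, ENNReal.ofReal_one, lintegral_one, measure_univ] at h0
  rw [show (0 : ℝ) - r / 2 - (m / 2 - α) = α - r / 2 - m / 2 by ring] at h0
  have hle := gamma_ineq ha hc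
  set I := ∫⁻ t in Set.Ioi (0 : ℝ),
    ENNReal.ofReal (t ^ ((r : ℝ) / 2 - 1) * (1 + t) ^ (α - r / 2 - m / 2)) with hI
  have hI2 : I = ENNReal.ofReal (Real.Gamma (r / 2) * Real.Gamma (m / 2 - α) /
      Real.Gamma (r / 2 + (m / 2 - α))) := by
    calc I = ENNReal.ofReal (Real.Gamma (r / 2) * Real.Gamma (m / 2 - α) /
      Real.Gamma (r / 2 + (m / 2 - α))) * (ENNReal.ofReal (Real.Gamma (r / 2 + (m / 2 - α)) /
        (Real.Gamma (r / 2) * Real.Gamma (m / 2 - α))) * I) := by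
          rw [← mul_assoc, ← ENNReal.ofReal_mul (by positivity), div_mul_div_cancel₀ hgac.ne',
            div_self (by positivity), ENNReal.ofReal_one, one_mul]
      _ = _ := by rw [← h0, mul_one]
  rw [hI2]
  apply ENNReal.ofReal_le_ofReal
  refine hle.trans (le_of_eq ?_)
  have : (m : ℝ) - 2 * α ≠ 0 := by linarith
  rw [show (m : ℝ) / 2 - α = (m - 2 * α) / 2 by ring, one_div_div, one_div_div, add_comm]
end

section
/- Let n, i, r be positive integers with n ≥ i + r. Then Γ((n−i+1)/2) / Γ((n−i−r+1)/2) ≤ (n/2)^{⌈r/2⌉}, where Γ is the Gamma function and ⌈·⌉ is the ceiling function. -/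
theorem aux_even (x X : ℝ) (hx : 0 < x) (k : ℕ) (h : x + k ≤ X) :
    Real.Gamma (x + k) ≤ Real.Gamma x * X ^ k := by
  induction k with
  | zero => simp
  | succ k ih =>
    push_cast at h ⊢
    have hk : (0 : ℝ) ≤ k := Nat.cast_nonneg k
    have h1 := ih (by linarith)
    have h2 : Real.Gamma (x + (k + 1)) = (x + k) * Real.Gamma (x + k) := by
      rw [← add_assoc, Real.Gamma_add_one (by positivity)]
    rw [h2, pow_succ]
    have h3 : 0 < Real.Gamma (x + k) := Real.Gamma_pos_of_pos (by positivity)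
    calc (x + k) * Real.Gamma (x + k) ≤ X * (Real.Gamma x * X ^ k) :=
          mul_le_mul (by linarith) h1 h3.le (by linarith)
      _ = _ := by ring

theorem aux_half (a : ℝ) (ha : 0 < a) :
    Real.Gamma (a + 1 / 2) ≤ Real.Gamma a * (a + 1 / 2) := by
  have h := Real.Gamma_mul_add_mul_le_rpow_Gamma_mul_rpow_Gamma (s := a) (t := a + 1)
    (a := 1 / 2) (b := 1 / 2) ha (by linarith) (by norm_num) (by norm_num) (by norm_num)
  have hG := Real.Gamma_pos_of_pos ha
  rw [show 1 / 2 * a + 1 / 2 * (a + 1) = a + 1 / 2 by ring, Real.Gamma_add_one ha.ne',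
    ← Real.sqrt_eq_rpow, ← Real.sqrt_eq_rpow, ← Real.sqrt_mul hG.le] at h
  refine h.trans (Real.sqrt_le_iff.mpr ⟨by positivity, ?_⟩)
  nlinarith [mul_nonneg (sq_nonneg (Real.Gamma a)) (add_nonneg (sq_nonneg a) (by norm_num : (0:ℝ) ≤ 1 / 4))]

theorem stmt_14 (n i r : ℕ) (hn : 0 < n) (hi : 0 < i) (hr : 0 < r)
    (h : i + r ≤ n) :
    Real.Gamma (((n : ℝ) - i + 1) / 2) / Real.Gamma (((n : ℝ) - i - r + 1) / 2) ≤
      ((n : ℝ) / 2) ^ ⌈(r : ℝ) / 2⌉₊ := by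
  have h' : (i : ℝ) + r ≤ n := by exact_mod_cast h
  have hi' : (1 : ℝ) ≤ i := by exact_mod_cast hi
  obtain ⟨a, ha⟩ : ∃ a : ℝ, a = ((n : ℝ) - i - r + 1) / 2 := ⟨_, rfl⟩
  have ha0 : 0 < a := by rw [ha]; linarith
  have hG := Real.Gamma_pos_of_pos ha0
  rw [show ((n : ℝ) - i + 1) / 2 = a + r / 2 by rw [ha]; ring, ← ha, div_le_iff₀ hG, mul_comm]
  have hX : a + r / 2 ≤ (n : ℝ) / 2 := by rw [ha]; linarith
  clear ha
  rcases Nat.even_or_odd' r with ⟨k, rfl | rfl⟩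
  · have e : ((2 * k : ℕ) : ℝ) / 2 = k := by push_cast; ring
    rw [e] at hX ⊢
    rw [Nat.ceil_natCast]
    exact aux_even a _ ha0 k hX
  · have e : ((2 * k + 1 : ℕ) : ℝ) / 2 = 1 / 2 + k := by push_cast; ring
    rw [e] at hX ⊢
    have c : ⌈(1 / 2 + k : ℝ)⌉₊ = k + 1 := by
      rw [Nat.ceil_eq_iff (by omega)]
      constructor <;> push_cast <;> norm_num <;> linarith
    have hk : (0 : ℝ) ≤ k := Nat.cast_nonneg k
    rw [c, ← add_assoc]
    refine (aux_even (a + 1 / 2) ((n : ℝ) / 2) (by linarith) k (by linarith)).trans ?_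
    rw [pow_succ', ← mul_assoc]
    refine mul_le_mul_of_nonneg_right ((aux_half a ha0).trans ?_) (by positivity)
    exact mul_le_mul_of_nonneg_left (by linarith) hG.le
end
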